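/- Let τ = (−1 − i·√7)/2 and let p = 8 or p = 12. Then the lattice S(p,τ) is generated by the union of two mirror stabilizers: the subgroup of GL(3,ℂ) generated by Stab(m₁) ∪ Stab(m₂) equals S(p,τ), where m₁ is the mirror of the complex reflection R₁ and m₂ = span_ℂ{e₁, R₃R₁·e₂} is the mirror of the complex reflection (R₁·R₃R₁R₂R₁⁻¹R₃⁻¹)³. -/

import Mathlib

open Matrix

noncomputable section

/-- `u = exp(2πi/(3p))`. -/
def uPar (p : ℕ) : ℂ := Complex.exp (2 * Real.pi * Complex.I / (3 * p))

/-- `α = 2 − u³ − conj(u)³`. -/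
def alphaPar (p : ℕ) : ℂ :=
  2 - uPar p ^ 3 - starRingEnd ℂ (uPar p) ^ 3

/-- `β = (conj(u)² − u)·τ`. -/
def betaPar (p : ℕ) (τ : ℂ) : ℂ := (starRingEnd ℂ (uPar p) ^ 2 - uPar p) * τ

/-- The generator `R₁` of `S(p,τ)`. -/
def R1S (p : ℕ) (τ : ℂ) : Matrix (Fin 3) (Fin 3) ℂ :=
  !![uPar p ^ 2, τ, -(uPar p) * starRingEnd ℂ τ;
     0, starRingEnd ℂ (uPar p), 0;
     0, 0, starRingEnd ℂ (uPar p)]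

/-- The reflection `R₂ = J·R₁·J⁻¹` of `S(p,τ)`. -/
def R2S (p : ℕ) (τ : ℂ) : Matrix (Fin 3) (Fin 3) ℂ :=
  !![starRingEnd ℂ (uPar p), 0, 0;
     -(uPar p) * starRingEnd ℂ τ, uPar p ^ 2, τ;
     0, 0, starRingEnd ℂ (uPar p)]

/-- The reflection `R₃ = J·R₂·J⁻¹` of `S(p,τ)`. -/
def R3S (p : ℕ) (τ : ℂ) : Matrix (Fin 3) (Fin 3) ℂ :=
  !![starRingEnd ℂ (uPar p), 0, 0;
     0, starRingEnd ℂ (uPar p), 0;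
     τ, -(uPar p) * starRingEnd ℂ τ, uPar p ^ 2]

/-- The cyclic permutation matrix `J`. -/
def Jmat : Matrix (Fin 3) (Fin 3) ℂ :=
  !![0, 0, 1; 1, 0, 0; 0, 1, 0]

/-- The linear functional `x ↦ a·x₁ + b·x₂ + c·x₃` on `ℂ³`. -/
def lfun (a b c : ℂ) : (Fin 3 → ℂ) →ₗ[ℂ] ℂ :=
  a • (LinearMap.proj 0 : (Fin 3 → ℂ) →ₗ[ℂ] ℂ) +
    b • (LinearMap.proj 1 : (Fin 3 → ℂ) →ₗ[ℂ] ℂ) +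
    c • (LinearMap.proj 2 : (Fin 3 → ℂ) →ₗ[ℂ] ℂ)

/-- The mirror of `R₁`: `{x ∈ ℂ³ : α·x₁ + β·x₂ + conj(β)·x₃ = 0}`,
the `H`-orthogonal complement of `e₁`. -/
def mirror1 (p : ℕ) (τ : ℂ) : Submodule ℂ (Fin 3 → ℂ) :=
  LinearMap.ker (lfun (alphaPar p) (betaPar p τ) (starRingEnd ℂ (betaPar p τ)))

/-- The stabilizer of a subspace `m` of `ℂ³` inside a subgroup `S` of `GL(3,ℂ)`:
the set of elements of `S` mapping `m` onto itself. -/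
def mirrorStab (S : Subgroup (GL (Fin 3) ℂ)) (m : Submodule ℂ (Fin 3 → ℂ)) :
    Set (GL (Fin 3) ℂ) :=
  {g | g ∈ S ∧ m.map (Matrix.mulVecLin (g : Matrix (Fin 3) (Fin 3) ℂ)) = m}

end

/-!
Up to scalars, `R₁`, `R₂`, `R₃` are complex reflections. A product of rank-one matrices
`e ⊗ ℓ`, `f ⊗ m` is governed by the numbers `ℓ e`, `m f`, `(ℓ f)(m e)`, so they satisfy
Temperley–Lieb relations, from which a braid relation of length four between `R₁` and `R₂` and one
of length three between `R₃` and `C = R₁R₂R₁⁻¹` can be read off. Moreover `J³ = 1`, and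
`(R₁J)⁷ = 1` because the characteristic polynomial of `R₁J` is a cubic factor of `X⁷ - 1`.

The braid relation of length four says that `R₂R₁R₂` commutes with `R₁`, and conjugation by `J`
turns it into the same statement for `R₃R₁R₃`; hence both stabilize `m₁`, an eigenspace of `R₁`.
The reflection `A = (R₃R₁)R₂(R₃R₁)⁻¹ = R₃CR₃⁻¹` has its root `R₃R₁e₂` in `m₂`, so it stabilizes
`m₂`. Using the other relations,
`A · R₃R₁R₃ · R₂R₁R₂ · A = R₃R₁J⁻¹R₁⁻¹`,
so the two stabilizers generate a group containing `W = R₃R₁J⁻¹`. Since `W R₃ W⁻¹ = A`, it contains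
`R₃`, and then `J = W⁻¹R₃R₁`.
-/

open Polynomial ComplexConjugate

section TemperleyLieb

variable {R A : Type*} [CommRing R] [Ring A] [Algebra R A] {c d k : R} {e f : A}

theorem smul_one_add_braid_three (he : e * e = d • e) (hf : f * f = d • f)
    (hef : e * f * e = k • e) (hfe : f * e * f = k • f) (h : c ^ 2 + c * d + k = 0) :
    (c • 1 + e) * (c • 1 + f) * (c • 1 + e) = (c • 1 + f) * (c • 1 + e) * (c • 1 + f) := by
  simp only [mul_add, add_mul, smul_mul_assoc, mul_smul_comm, one_mul, mul_one, he, hf, hef, hfe]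
  linear_combination (norm := module) h • (e - f)

theorem smul_one_add_braid_four (he : e * e = d • e) (hf : f * f = d • f)
    (hef : e * f * e = k • e) (hfe : f * e * f = k • f) (h : 2 * c ^ 2 + 2 * (c * d) + k = 0) :
    (c • 1 + e) * (c • 1 + f) * (c • 1 + e) * (c • 1 + f) =
      (c • 1 + f) * (c • 1 + e) * (c • 1 + f) * (c • 1 + e) := by
  have hff : e * f * f = d • (e * f) := by rw [mul_assoc, hf, mul_smul_comm]
  have hee : f * e * e = d • (f * e) := by rw [mul_assoc, he, mul_smul_comm]
  simp only [mul_add, add_mul, smul_mul_assoc, mul_smul_comm, one_mul, mul_one, he, hf, hef, hfe,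
    hff, hee]
  linear_combination (norm := module) h • (e * f - f * e)

end TemperleyLieb

section ScaledReflection

variable {n R : Type*} [Fintype n] [CommRing R]

theorem vecMulVec_mul_vecMulVec_self (e ℓ : n → R) :
    vecMulVec e ℓ * vecMulVec e ℓ = (ℓ ⬝ᵥ e) • vecMulVec e ℓ := by
  rw [vecMulVec_mul_vecMulVec, vecMulVec_smul]

theorem vecMulVec_mul_mul_vecMulVec_self (e f ℓ m : n → R) :
    vecMulVec e ℓ * vecMulVec f m * vecMulVec e ℓ = ((ℓ ⬝ᵥ f) * (m ⬝ᵥ e)) • vecMulVec e ℓ := by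
  simp only [vecMulVec_mul_vecMulVec, vecMulVec_smul, smul_mul_assoc, mul_smul]

variable [DecidableEq n]

/-- A complex reflection up to scaling, with root `e`: it multiplies `ker ℓ` by `c` and, when
`ℓ e = μ - c`, multiplies `e` by `μ`. -/
def scaledReflection (c : R) (e ℓ : n → R) : Matrix n n R :=
  c • 1 + vecMulVec e ℓ

theorem scaledReflection_mulVec (c : R) (e ℓ x : n → R) :
    scaledReflection c e ℓ *ᵥ x = c • x + (ℓ ⬝ᵥ x) • e := by
  rw [scaledReflection, add_mulVec, smul_mulVec, one_mulVec, vecMulVec_mulVec, op_smul_eq_smul]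

theorem conj_scaledReflection (g : GL n R) (c : R) (e ℓ : n → R) :
    (g : Matrix n n R) * scaledReflection c e ℓ * (g⁻¹ : GL n R) =
      scaledReflection c ((g : Matrix n n R) *ᵥ e) (ℓ ᵥ* (g⁻¹ : GL n R)) := by
  simp only [scaledReflection, mul_add, add_mul, mul_smul_comm, smul_mul_assoc, mul_one,
    mul_vecMulVec, vecMulVec_mul, Units.mul_inv]

variable {c μ : R} {e f ℓ m : n → R}

theorem scaledReflection_braid_three (he : ℓ ⬝ᵥ e = μ - c) (hf : m ⬝ᵥ f = μ - c)
    (h : (ℓ ⬝ᵥ f) * (m ⬝ᵥ e) = -(c * μ)) :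
    scaledReflection c e ℓ * scaledReflection c f m * scaledReflection c e ℓ =
      scaledReflection c f m * scaledReflection c e ℓ * scaledReflection c f m := by
  refine smul_one_add_braid_three (d := μ - c) (k := -(c * μ)) ?_ ?_ ?_ ?_ (by ring)
  · rw [vecMulVec_mul_vecMulVec_self, he]
  · rw [vecMulVec_mul_vecMulVec_self, hf]
  · rw [vecMulVec_mul_mul_vecMulVec_self, h]
  · rw [vecMulVec_mul_mul_vecMulVec_self, mul_comm, h]

theorem scaledReflection_braid_four (he : ℓ ⬝ᵥ e = μ - c) (hf : m ⬝ᵥ f = μ - c)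
    (h : (ℓ ⬝ᵥ f) * (m ⬝ᵥ e) = -(2 * (c * μ))) :
    scaledReflection c e ℓ * scaledReflection c f m * scaledReflection c e ℓ *
        scaledReflection c f m =
      scaledReflection c f m * scaledReflection c e ℓ * scaledReflection c f m *
        scaledReflection c e ℓ := by
  refine smul_one_add_braid_four (d := μ - c) (k := -(2 * (c * μ))) ?_ ?_ ?_ ?_ (by ring)
  · rw [vecMulVec_mul_vecMulVec_self, he]
  · rw [vecMulVec_mul_vecMulVec_self, hf]
  · rw [vecMulVec_mul_mul_vecMulVec_self, h]
  · rw [vecMulVec_mul_mul_vecMulVec_self, mul_comm, h]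

end ScaledReflection

section Stabilizer

theorem map_mulVecLin_eq_of_forall_mem {n K : Type*} [Fintype n] [DecidableEq n] [Field K]
    (g : GL n K) {m : Submodule K (n → K)} (h : ∀ x ∈ m, (g : Matrix n n K) *ᵥ x ∈ m) :
    m.map (mulVecLin (g : Matrix n n K)) = m := by
  have hinj : Function.Injective (mulVecLin (g : Matrix n n K)) :=
    mulVec_injective_of_isUnit g.isUnit
  exact Submodule.eq_of_le_of_finrank_eq (Submodule.map_le_iff_le_comap.2 h)
    (Submodule.equivMapOfInjective _ hinj m).finrank_eq.symm

variable {S : Subgroup (GL (Fin 3) ℂ)} {g : GL (Fin 3) ℂ}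

theorem mem_mirrorStab_eigenspace_of_commute {r : GL (Fin 3) ℂ} (hg : g ∈ S) (hrg : Commute r g)
    (c : ℂ) :
    g ∈ mirrorStab S
      (Module.End.eigenspace (mulVecLin (r : Matrix (Fin 3) (Fin 3) ℂ)) c) := by
  refine ⟨hg, map_mulVecLin_eq_of_forall_mem g fun x hx ↦ ?_⟩
  rw [Module.End.mem_eigenspace_iff, mulVecLin_apply] at hx ⊢
  rw [mulVec_mulVec, ← Units.val_mul, hrg.eq, Units.val_mul, ← mulVec_mulVec, hx, mulVec_smul]

theorem conj_mem_mirrorStab {r : GL (Fin 3) ℂ} {c : ℂ} {e ℓ : Fin 3 → ℂ}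
    {m : Submodule ℂ (Fin 3 → ℂ)} (hg : g ∈ S) (hrS : r ∈ S)
    (hr : (r : Matrix (Fin 3) (Fin 3) ℂ) = scaledReflection c e ℓ)
    (he : (g : Matrix (Fin 3) (Fin 3) ℂ) *ᵥ e ∈ m) : g * r * g⁻¹ ∈ mirrorStab S m := by
  refine ⟨mul_mem (mul_mem hg hrS) (inv_mem hg), map_mulVecLin_eq_of_forall_mem _ fun x hx ↦ ?_⟩
  rw [Units.val_mul, Units.val_mul, hr, conj_scaledReflection, scaledReflection_mulVec]
  exact m.add_mem (m.smul_mem c hx) (m.smul_mem _ he)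

end Stabilizer

/-- Relations, independent of `p`, between `R₁, R₂, R₃, J` in the lattices `S(p, τ)` with
`τ = (-1 ± i√7)/2`: conjugation by `j` permutes `r₁ ↦ r₂ ↦ r₃`, and `j ^ 3 = (r₁ * j) ^ 7 = 1`;
`r₁, r₂` satisfy a braid relation of length four and `r₃, r₁ * r₂ * r₁⁻¹` one of length three.
They are all that the group-theoretic part of the argument needs. -/
structure SporadicRelations {G : Type*} [Group G] (r₁ r₂ r₃ j : G) : Prop where
  semiconj₁₂ : SemiconjBy j r₁ r₂
  semiconj₂₃ : SemiconjBy j r₂ r₃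
  pow_three : j ^ 3 = 1
  mul_pow_seven : (r₁ * j) ^ 7 = 1
  braid_four : r₁ * r₂ * r₁ * r₂ = r₂ * r₁ * r₂ * r₁
  braid_three : r₃ * (r₁ * r₂ * r₁⁻¹) * r₃ = r₁ * r₂ * r₁⁻¹ * r₃ * (r₁ * r₂ * r₁⁻¹)

namespace SporadicRelations

variable {G : Type*} [Group G] {r₁ r₂ r₃ j : G}

theorem semiconj₃₁ (h : SporadicRelations r₁ r₂ r₃ j) : SemiconjBy j r₃ r₁ := by
  have hj : (j * j)⁻¹ = j := inv_eq_of_mul_eq_one_right (by rw [← pow_three', h.pow_three])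
  simpa only [hj] using (h.semiconj₂₃.mul_left h.semiconj₁₂).inv_symm_left

theorem commute₂₁₂ (h : SporadicRelations r₁ r₂ r₃ j) : Commute r₁ (r₂ * r₁ * r₂) := by
  simpa only [Commute, SemiconjBy, mul_assoc] using h.braid_four

theorem commute₃₁₃ (h : SporadicRelations r₁ r₂ r₃ j) : Commute r₁ (r₃ * r₁ * r₃) := by
  have h₂ : Commute r₂ (r₁ * r₂ * r₁) := by
    simpa only [Commute, SemiconjBy, mul_assoc] using h.braid_four.symm
  have hj : SemiconjBy j (r₃ * r₁ * r₃) (r₁ * r₂ * r₁) :=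
    (h.semiconj₃₁.mul_right h.semiconj₁₂).mul_right h.semiconj₃₁
  refine mul_left_cancel (a := j) ?_
  rw [(h.semiconj₁₂.mul_right hj).eq, (hj.mul_right h.semiconj₁₂).eq, h₂.eq]

theorem mul_mul_eq_pow_three (h : SporadicRelations r₁ r₂ r₃ j) : r₁ * r₂ * r₃ = (r₁ * j) ^ 3 := by
  calc r₁ * r₂ * r₃ = r₁ * r₂ * r₃ * (j * j * j) := by rw [← pow_three', h.pow_three, mul_one]
    _ = r₁ * r₂ * (r₃ * j) * j * j := by group
    _ = r₁ * (r₂ * j) * (r₂ * j) * j := by rw [← h.semiconj₂₃.eq]; simp only [mul_assoc]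
    _ = (r₁ * j) ^ 3 := by rw [← h.semiconj₁₂.eq, pow_three']; simp only [mul_assoc]

theorem conj_mul_mul_conj_eq (h : SporadicRelations r₁ r₂ r₃ j) :
    r₃ * r₁ * r₂ * (r₃ * r₁)⁻¹ * (r₃ * r₁ * r₃) * (r₂ * r₁ * r₂) * (r₃ * r₁ * r₂ * (r₃ * r₁)⁻¹) =
      r₃ * r₁ * j⁻¹ * r₁⁻¹ := by
  obtain ⟨c, hc⟩ : ∃ c, c = r₁ * r₂ * r₁⁻¹ := ⟨_, rfl⟩
  have ha : r₃ * r₁ * r₂ * (r₃ * r₁)⁻¹ = r₃ * c * r₃⁻¹ := by rw [hc]; group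
  have ha' : r₃ * c * r₃⁻¹ = c⁻¹ * r₃ * c := by
    rw [mul_inv_eq_iff_eq_mul, mul_assoc, mul_assoc, eq_inv_mul_iff_mul_eq, ← mul_assoc,
      ← mul_assoc, hc, h.braid_three]
  have hq : r₂ * r₁ * r₂ = c * r₁ * c := by
    rw [hc, inv_mul_cancel_right, ← mul_assoc, ← mul_assoc, h.braid_four, mul_inv_cancel_right]
  have hP : (r₁ * r₂ * r₃) ^ 2 * r₁ = j⁻¹ := by
    rw [h.mul_mul_eq_pow_three, ← pow_mul, eq_inv_iff_mul_eq_one, mul_assoc, ← pow_succ,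
      h.mul_pow_seven]
  -- `r₃ * c * r₃⁻¹` occurs at both ends; replacing only the last one by `c⁻¹ * r₃ * c` cancels.
  calc _ = r₃ * c * r₃⁻¹ * (r₃ * r₁ * r₃) * (c * r₁ * c) * (c⁻¹ * r₃ * c) := by
        rw [ha, hq, ← ha']
    _ = r₃ * ((r₁ * r₂ * r₃) ^ 2 * r₁) * r₂ * r₁⁻¹ := by rw [hc, sq]; group
    _ = r₃ * (r₁ * j⁻¹) * r₁⁻¹ := by
        rw [hP, mul_assoc r₃, h.semiconj₁₂.inv_symm_left.eq]
    _ = r₃ * r₁ * j⁻¹ * r₁⁻¹ := by rw [← mul_assoc r₃]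

theorem j_mem (h : SporadicRelations r₁ r₂ r₃ j) {K : Subgroup G} (h₁ : r₁ ∈ K)
    (h₂₁₂ : r₂ * r₁ * r₂ ∈ K) (h₃₁₃ : r₃ * r₁ * r₃ ∈ K)
    (ha : r₃ * r₁ * r₂ * (r₃ * r₁)⁻¹ ∈ K) : j ∈ K := by
  have hw : r₃ * r₁ * j⁻¹ ∈ K := by
    rw [← inv_mul_cancel_right (r₃ * r₁ * j⁻¹) r₁, ← h.conj_mul_mul_conj_eq]
    exact mul_mem (mul_mem (mul_mem (mul_mem ha h₃₁₃) h₂₁₂) ha) h₁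
  have h₃ : r₃ ∈ K := by
    have hconj : r₃ * r₁ * r₂ * (r₃ * r₁)⁻¹ * (r₃ * r₁ * j⁻¹) = r₃ * r₁ * j⁻¹ * r₃ := by
      rw [mul_assoc (r₃ * r₁) j⁻¹ r₃, h.semiconj₂₃.inv_symm_left.eq]; group
    rw [eq_inv_mul_of_mul_eq hconj.symm]
    exact mul_mem (inv_mem hw) (mul_mem ha hw)
  have hj : j = (r₃ * r₁ * j⁻¹)⁻¹ * (r₃ * r₁) := by group
  rw [hj]
  exact mul_mem (inv_mem hw) (mul_mem h₃ h₁)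

theorem r₂_mem (h : SporadicRelations r₁ r₂ r₃ j) {K : Subgroup G} (h₁ : r₁ ∈ K)
    (hj : j ∈ K) : r₂ ∈ K := by
  rw [← mul_inv_eq_of_eq_mul h.semiconj₁₂.eq]
  exact mul_mem (mul_mem hj h₁) (inv_mem hj)

theorem r₃_mem (h : SporadicRelations r₁ r₂ r₃ j) {K : Subgroup G} (h₁ : r₁ ∈ K)
    (hj : j ∈ K) : r₃ ∈ K := by
  rw [← mul_inv_eq_of_eq_mul h.semiconj₂₃.eq]
  exact mul_mem (mul_mem hj (h.r₂_mem h₁ hj)) (inv_mem hj)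

end SporadicRelations

theorem cubic_dvd_X_pow_seven_sub_one {R : Type*} [CommRing R] {t s : R} (hadd : t + s = -1)
    (hmul : t * s = 2) : X ^ 3 - C t * X ^ 2 + C s * X - 1 ∣ (X ^ 7 - 1 : R[X]) := by
  have hs : C s = -1 - C t := by rw [eq_sub_iff_add_eq', ← C_add, hadd, C_neg, C_1]
  have ht : C t * (-1 - C t) = 2 := by rw [← hs, ← C_mul, hmul, C_ofNat]
  refine ⟨(X - 1) * (X ^ 3 - C s * X ^ 2 + C t * X - 1), ?_⟩
  rw [hs]
  linear_combination -((X - 1) * (X ^ 4 + 2 * X ^ 3 + X ^ 2)) * ht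

section Lattice

variable (p : ℕ) (τ : ℂ)

theorem uPar_mul_conj : uPar p * conj (uPar p) = 1 := by
  rw [uPar, ← Complex.exp_conj, ← Complex.exp_add, Complex.exp_eq_one_iff]
  refine ⟨0, ?_⟩
  simp only [map_div₀, map_mul, Complex.conj_I, Complex.conj_ofReal, map_ofNat, map_natCast]
  ring

theorem uPar_pow_three : uPar p ^ 3 = Complex.exp (2 * Real.pi * Complex.I / p) := by
  rw [uPar, ← Complex.exp_nat_mul]
  congr 1
  push_cast
  field_simp

theorem R1S_eq_scaledReflection : R1S p τ = scaledReflection (conj (uPar p)) (Pi.single 0 1)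
    ![uPar p ^ 2 - conj (uPar p), τ, -uPar p * conj τ] := by
  ext i k
  fin_cases i <;> fin_cases k <;> simp [R1S, scaledReflection]

theorem R2S_eq_scaledReflection : R2S p τ = scaledReflection (conj (uPar p)) (Pi.single 1 1)
    ![-uPar p * conj τ, uPar p ^ 2 - conj (uPar p), τ] := by
  ext i k
  fin_cases i <;> fin_cases k <;> simp [R2S, scaledReflection]

theorem R3S_eq_scaledReflection : R3S p τ = scaledReflection (conj (uPar p)) (Pi.single 2 1)
    ![τ, -uPar p * conj τ, uPar p ^ 2 - conj (uPar p)] := by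
  ext i k
  fin_cases i <;> fin_cases k <;> simp [R3S, scaledReflection]

theorem semiconjBy_Jmat_R1S_R2S : SemiconjBy Jmat (R1S p τ) (R2S p τ) := by
  ext i k
  fin_cases i <;> fin_cases k <;> simp [Jmat, R1S, R2S]

theorem semiconjBy_Jmat_R2S_R3S : SemiconjBy Jmat (R2S p τ) (R3S p τ) := by
  ext i k
  fin_cases i <;> fin_cases k <;> simp [Jmat, R2S, R3S]

theorem Jmat_pow_three : Jmat ^ 3 = 1 := by
  rw [pow_three]
  ext i k
  fin_cases i <;> fin_cases k <;> simp [Jmat]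

theorem charpoly_R1S_mul_Jmat :
    (R1S p τ * Jmat).charpoly = X ^ 3 - C τ * X ^ 2 + C (conj τ) * X - 1 := by
  have hu : (C (uPar p) * C (conj (uPar p)) : ℂ[X]) = 1 := by
    rw [← C_mul, uPar_mul_conj, C_1]
  have hchar : (R1S p τ * Jmat).charmatrix = !![X - C τ, C (uPar p) * C (conj τ), -C (uPar p) ^ 2;
      -C (conj (uPar p)), X, 0; 0, -C (conj (uPar p)), X] := by
    ext i k
    fin_cases i <;> fin_cases k <;> simp [R1S, Jmat]
  rw [Matrix.charpoly, hchar, det_fin_three]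
  simp only [of_apply, cons_val]
  linear_combination (C (conj τ) * X - C (uPar p) * C (conj (uPar p)) - 1) * hu

theorem R1S_mul_Jmat_pow_seven (hadd : τ + conj τ = -1) (hmul : τ * conj τ = 2) :
    (R1S p τ * Jmat) ^ 7 = 1 := by
  obtain ⟨q, hq⟩ := cubic_dvd_X_pow_seven_sub_one hadd hmul
  have haeval := congrArg (aeval (R1S p τ * Jmat)) hq
  rw [← charpoly_R1S_mul_Jmat p, map_mul, aeval_self_charpoly, zero_mul] at haeval
  simpa [sub_eq_zero] using haeval

theorem R1S_braid_four_R2S (hτ : τ * conj τ = 2) :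
    R1S p τ * R2S p τ * R1S p τ * R2S p τ = R2S p τ * R1S p τ * R2S p τ * R1S p τ := by
  rw [R1S_eq_scaledReflection, R2S_eq_scaledReflection]
  refine scaledReflection_braid_four (μ := uPar p ^ 2) ?_ ?_ ?_
  · simp
  · simp
  · simp only [dotProduct_single, cons_val, mul_one]
    linear_combination 2 * uPar p * uPar_mul_conj p - uPar p * hτ

variable {p τ} in
theorem R3S_braid_three_conj {r₁ r₂ r₃ : GL (Fin 3) ℂ}
    (hr₁ : (r₁ : Matrix (Fin 3) (Fin 3) ℂ) = R1S p τ)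
    (hr₂ : (r₂ : Matrix (Fin 3) (Fin 3) ℂ) = R2S p τ)
    (hr₃ : (r₃ : Matrix (Fin 3) (Fin 3) ℂ) = R3S p τ)
    (hτ : (τ ^ 2 - conj τ) * (conj τ ^ 2 - τ) = 1) :
    r₃ * (r₁ * r₂ * r₁⁻¹) * r₃ = r₁ * r₂ * r₁⁻¹ * r₃ * (r₁ * r₂ * r₁⁻¹) := by
  have hu := uPar_mul_conj p
  have he₂ : (r₁ : Matrix (Fin 3) (Fin 3) ℂ) *ᵥ Pi.single 1 1 = ![τ, conj (uPar p), 0] := by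
    rw [hr₁]
    ext i
    fin_cases i <;> simp [R1S]
  have he₃ : ((r₁⁻¹ : GL (Fin 3) ℂ) : Matrix (Fin 3) (Fin 3) ℂ) *ᵥ Pi.single 2 1 =
      ![conj τ, 0, uPar p] := by
    have hinv : (r₁ : Matrix (Fin 3) (Fin 3) ℂ) *ᵥ ![conj τ, 0, uPar p] = Pi.single 2 1 := by
      rw [hr₁]
      ext i
      fin_cases i
      · have hrow : conj τ * uPar p ^ 2 - uPar p * (uPar p * conj τ) = 0 := by ring
        simpa [R1S, sub_eq_add_neg] using hrow
      · simp [R1S]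
      · simp [R1S, mul_comm, hu]
    rw [← hinv, mulVec_mulVec, Units.inv_mul, one_mulVec]
  apply Units.ext
  simp only [Units.val_mul]
  rw [hr₃, hr₂, R2S_eq_scaledReflection, R3S_eq_scaledReflection, conj_scaledReflection]
  refine scaledReflection_braid_three (μ := uPar p ^ 2) ?_ ?_ ?_
  · simp
  · rw [← dotProduct_mulVec, mulVec_mulVec, Units.inv_mul, one_mulVec]
    simp
  · rw [← dotProduct_mulVec, he₂, he₃]
    simp only [vec3_dotProduct']
    linear_combination (conj τ * uPar p * (conj τ ^ 2 - τ) + uPar p) * hu - uPar p * hτ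

variable {p} in
theorem mirror1_eq_eigenspace (hp : 2 ≤ p) :
    mirror1 p τ = Module.End.eigenspace (mulVecLin (R1S p τ)) (conj (uPar p)) := by
  have hu := uPar_mul_conj p
  have hu3 : conj (uPar p) ^ 2 - uPar p ≠ 0 := by
    intro h
    have h₃ : uPar p ^ 3 = 1 := by
      linear_combination (-uPar p ^ 2) * h + (uPar p * conj (uPar p) + 1) * hu
    rw [uPar_pow_three] at h₃
    exact (Complex.isPrimitiveRoot_exp p (by omega)).ne_one hp h₃
  ext x
  rw [Module.End.mem_eigenspace_iff, mulVecLin_apply, R1S_eq_scaledReflection,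
    scaledReflection_mulVec, add_eq_left, smul_eq_zero_iff_left (by simp),
    ← mul_right_inj' hu3, mul_zero]
  have hrow : alphaPar p * x 0 + betaPar p τ * x 1 + conj (betaPar p τ) * x 2 =
      (conj (uPar p) ^ 2 - uPar p) *
        (![uPar p ^ 2 - conj (uPar p), τ, -uPar p * conj τ] ⬝ᵥ x) := by
    simp only [vec3_dotProduct, alphaPar, betaPar, map_mul, map_sub, map_pow, Complex.conj_conj]
    simp only [cons_val]
    linear_combination
      (conj (uPar p) * conj τ * x 2 - (uPar p * conj (uPar p) + 2) * x 0) * hu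
  rw [← hrow]
  simp [mirror1, lfun]

end Lattice

theorem sporadicRelations {p : ℕ} {τ : ℂ} {r₁ r₂ r₃ j : GL (Fin 3) ℂ}
    (hadd : τ + conj τ = -1) (hmul : τ * conj τ = 2)
    (hr₁ : (r₁ : Matrix (Fin 3) (Fin 3) ℂ) = R1S p τ)
    (hr₂ : (r₂ : Matrix (Fin 3) (Fin 3) ℂ) = R2S p τ)
    (hr₃ : (r₃ : Matrix (Fin 3) (Fin 3) ℂ) = R3S p τ)
    (hj : (j : Matrix (Fin 3) (Fin 3) ℂ) = Jmat) :
    SporadicRelations r₁ r₂ r₃ j where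
  semiconj₁₂ := by
    rw [← SemiconjBy.units_val_iff, hj, hr₁, hr₂]
    exact semiconjBy_Jmat_R1S_R2S p τ
  semiconj₂₃ := by
    rw [← SemiconjBy.units_val_iff, hj, hr₂, hr₃]
    exact semiconjBy_Jmat_R2S_R3S p τ
  pow_three := Units.ext (by rw [Units.val_pow_eq_pow_val, hj, Jmat_pow_three, Units.val_one])
  mul_pow_seven := Units.ext (by
    rw [Units.val_pow_eq_pow_val, Units.val_mul, hr₁, hj, R1S_mul_Jmat_pow_seven p τ hadd hmul,
      Units.val_one])
  braid_four := Units.ext (by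
    simpa only [Units.val_mul, hr₁, hr₂] using R1S_braid_four_R2S p τ hmul)
  braid_three := by
    refine R3S_braid_three_conj hr₁ hr₂ hr₃ ?_
    have h₁ : τ ^ 2 - conj τ = -1 := by linear_combination τ * hadd - hmul - hadd
    have h₂ : conj τ ^ 2 - τ = -1 := by linear_combination conj τ * hadd - hmul - hadd
    rw [h₁, h₂, neg_one_mul, neg_neg]

theorem conj_eq_of_sq_add_self_add_two {τ : ℂ} (hτ : τ ^ 2 + τ + 2 = 0) : conj τ = -1 - τ := by
  have hconj : conj τ ^ 2 + conj τ + 2 = 0 := by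
    simpa only [map_add, map_pow, map_ofNat, map_zero] using congrArg conj hτ
  have hmul : (conj τ - τ) * (conj τ - (-1 - τ)) = 0 := by linear_combination hconj - hτ
  refine (mul_eq_zero.1 hmul).elim (fun hreal ↦ ?_) sub_eq_zero.1
  obtain ⟨x, rfl⟩ := Complex.conj_eq_iff_real.1 (sub_eq_zero.1 hreal)
  have hx : x ^ 2 + x + 2 = 0 := by exact_mod_cast hτ
  nlinarith [sq_nonneg (2 * x + 1)]

theorem sq_add_self_add_two_eq_zero {τ : ℂ} (hτ : τ = (-1 - Complex.I * Real.sqrt 7) / 2) :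
    τ ^ 2 + τ + 2 = 0 := by
  have h₇ : ((Real.sqrt 7 : ℝ) : ℂ) ^ 2 = 7 := by
    rw [← Complex.ofReal_pow, Real.sq_sqrt (by norm_num), Complex.ofReal_ofNat]
  rw [hτ]
  linear_combination (Real.sqrt 7 ^ 2 / 4 : ℂ) * Complex.I_sq - h₇ / 4

theorem exists_coe_eq_R2S_R3S {p : ℕ} {τ : ℂ} {r₁ j : GL (Fin 3) ℂ}
    (hr₁ : (r₁ : Matrix (Fin 3) (Fin 3) ℂ) = R1S p τ)
    (hj : (j : Matrix (Fin 3) (Fin 3) ℂ) = Jmat) :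
    ∃ r₂ r₃ : GL (Fin 3) ℂ, (r₂ : Matrix (Fin 3) (Fin 3) ℂ) = R2S p τ ∧
      (r₃ : Matrix (Fin 3) (Fin 3) ℂ) = R3S p τ := by
  have hr₂ : ((j * r₁ * j⁻¹ : GL (Fin 3) ℂ) : Matrix (Fin 3) (Fin 3) ℂ) = R2S p τ := by
    rw [Units.val_mul, Units.mul_inv_eq_iff_eq_mul, Units.val_mul, hj, hr₁]
    exact semiconjBy_Jmat_R1S_R2S p τ
  refine ⟨_, j * (j * r₁ * j⁻¹) * j⁻¹, hr₂, ?_⟩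
  rw [Units.val_mul, Units.mul_inv_eq_iff_eq_mul, Units.val_mul, hj, hr₂]
  exact semiconjBy_Jmat_R2S_R3S p τ

theorem stmt14_general {p : ℕ} (hp : 2 ≤ p) {τ : ℂ} (hτ : τ ^ 2 + τ + 2 = 0)
    {r₁ j : GL (Fin 3) ℂ} (hr₁ : (r₁ : Matrix (Fin 3) (Fin 3) ℂ) = R1S p τ)
    (hj : (j : Matrix (Fin 3) (Fin 3) ℂ) = Jmat) :
    Subgroup.closure
        (mirrorStab (Subgroup.closure {r₁, j}) (mirror1 p τ) ∪
          mirrorStab (Subgroup.closure {r₁, j})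
            (Submodule.span ℂ
              {Pi.single 0 1, (R3S p τ * R1S p τ).mulVec (Pi.single 1 1)})) =
      Subgroup.closure {r₁, j} := by
  obtain ⟨r₂, r₃, hr₂, hr₃⟩ := exists_coe_eq_R2S_R3S hr₁ hj
  have hconj : conj τ = -1 - τ := conj_eq_of_sq_add_self_add_two hτ
  have h : SporadicRelations r₁ r₂ r₃ j := sporadicRelations
    (by rw [hconj]; ring) (by rw [hconj]; linear_combination -hτ) hr₁ hr₂ hr₃ hj
  rw [mirror1_eq_eigenspace τ hp, ← hr₃, ← hr₁, ← Units.val_mul]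
  set S := Subgroup.closure {r₁, j}
  have h₁ : r₁ ∈ S := Subgroup.subset_closure (.inl rfl)
  have hjS : j ∈ S := Subgroup.subset_closure (.inr rfl)
  have h₂ : r₂ ∈ S := h.r₂_mem h₁ hjS
  have h₃ : r₃ ∈ S := h.r₃_mem h₁ hjS
  set m₂ : Submodule ℂ (Fin 3 → ℂ) := Submodule.span ℂ _
  set K := Subgroup.closure (mirrorStab S _ ∪ mirrorStab S m₂)
  have mem_K {g : GL (Fin 3) ℂ} (hg : g ∈ S) (hcomm : Commute r₁ g) : g ∈ K :=
    Subgroup.subset_closure (.inl (mem_mirrorStab_eigenspace_of_commute hg hcomm _))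
  have ha : r₃ * r₁ * r₂ * (r₃ * r₁)⁻¹ ∈ K := Subgroup.subset_closure (.inr
    (conj_mem_mirrorStab (mul_mem h₃ h₁) h₂ (hr₂.trans (R2S_eq_scaledReflection p τ))
      (Submodule.subset_span (.inr rfl))))
  have h₁K : r₁ ∈ K := mem_K h₁ (.refl r₁)
  have hjK : j ∈ K := h.j_mem h₁K
    (mem_K (mul_mem (mul_mem h₂ h₁) h₂) h.commute₂₁₂)
    (mem_K (mul_mem (mul_mem h₃ h₁) h₃) h.commute₃₁₃) ha
  apply le_antisymm
  · exact (Subgroup.closure_le _).2 (Set.union_subset (fun _ hg ↦ hg.1) fun _ hg ↦ hg.1)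
  · exact (Subgroup.closure_le _).2 (Set.pair_subset h₁K hjK)

/-- For `τ = (−1−i√7)/2` and `p = 8` or `12`, the lattice `S(p,τ)` is generated by
the union of the stabilizers of the mirror of `R₁` and of the mirror
`span{e₁, R₃R₁·e₂}` of the complex reflection `(R₁·R₃R₁R₂R₁⁻¹R₃⁻¹)³`. -/
theorem stmt14 (p : ℕ) (hp : p = 8 ∨ p = 12)
    (τ : ℂ) (hτ : τ = (-1 - Complex.I * Real.sqrt 7) / 2)
    (r₁ j : GL (Fin 3) ℂ)
    (hr₁ : (↑r₁ : Matrix (Fin 3) (Fin 3) ℂ) = R1S p τ)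
    (hj : (↑j : Matrix (Fin 3) (Fin 3) ℂ) = Jmat) :
    Subgroup.closure
        (mirrorStab (Subgroup.closure {r₁, j}) (mirror1 p τ) ∪
          mirrorStab (Subgroup.closure {r₁, j})
            (Submodule.span ℂ
              {Pi.single 0 1, (R3S p τ * R1S p τ).mulVec (Pi.single 1 1)})) =
      Subgroup.closure {r₁, j} :=
  stmt14_general (by omega) (sq_add_self_add_two_eq_zero hτ) hr₁ hj
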